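/- arXiv:1207.5222 — 4 statements merged into one kernel-verified Lean document; each statement's English description precedes it below -/
import Mathlib

section
/- Let −∞ < a < b ≤ +∞, α > 0 real, β ∈ ℂ with Re β > 0, f : [a,b) → ℝ, g : (a,b) → ℂ, and let (a_k)_{k≥0} be real numbers with a_0 > 0 and (b_k)_{k≥0} complex numbers with b_0 ≠ 0. Assume: (i) f(x) > f(a) for all x ∈ (a,b), and for every δ > 0 the infimum of f(x) − f(a) over [a+δ, b) is positive; (ii) there is ε > 0 such that f is differentiable on (a, a+ε) and f′ and g are continuous on (a, a+ε); (iii) for every N ≥ 0, as x → a⁺, f(x) − f(a) = Σ_{k=0}^{N−1} a_k (x−a)^{k+α} + O((x−a)^{N+α}), f′(x) = Σ_{k=0}^{N−1} a_k (k+α)(x−a)^{k+α−1} + O((x−a)^{N+α−1}), and g(x) = Σ_{k=0}^{N−1} b_k (x−a)^{k+β−1} + O((x−a)^{N+Re β−1}); (iv) the integral ∫_a^b e^{−λ f(x)} g(x) dx converges absolutely for all sufficiently large λ. Then for every N ≥ 0, as λ → +∞ through real values, ∫_a^b e^{−λ f(x)} g(x) dx = e^{−λ f(a)} ( Σ_{n=0}^{N−1}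 Γ((n+β)/α) c_n λ^{−(n+β)/α} + O(λ^{−(N+Re β)/α}) ), where c_n = (1/(α Γ((n+β)/α))) Σ_{k=0}^n b_{n−k} Σ_{j=0}^k ((−1)^j / (a_0^{(n+β)/α + j} j!)) Γ((n+β)/α + j) B_{k,j}(a_1,…,a_{k−j+1}). -/
open Finset MeasureTheory Real Asymptotics Filter Topology

/-- Partial ordinary Bell polynomials: `obell f n k` is the coefficient of `x^n` in
`(∑_{m ≥ 1} f m * x^m)^k`, i.e. `B_{n,k}(f₁, …, f_{n-k+1})`. -/
noncomputable def obell (f : ℕ → ℂ) (n k : ℕ) : ℂ :=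
  PowerSeries.coeff n ((PowerSeries.mk fun m => if m = 0 then 0 else f m) ^ k)

/-!
Translate `a` to `0`. With `F = f - f(a) = t ^ α (a₀ + R(t))`, `g = t ^ (β - 1) H(t)` and
`u = l t ^ α`, the integrand `exp (-l F) g` becomes `t ^ (β - 1) exp (-a₀ u) · exp (-u R(t)) H(t)`.
Expanding `exp (-u R(t)) H(t)` in powers of `t`, the coefficients are polynomials in `u` given by
Bell polynomials, and since `R(t) = O(t)` the remainder is `O(t ^ N exp (c u))` uniformly in
`u ≥ 0`, for every `c > 0`. For `c < a₀` the kernel `exp (-a₀ u)` absorbs this growth, so the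
remainder integrates to `O(l ^ (-(N + Re β) / α))`, while each term of the expansion integrates to a
value of `Γ`. No inversion of `F` is needed: the change of variables takes place only in the model
integrals. Away from `0` the integral is exponentially small.
-/

open Polynomial
open scoped PowerSeries

section Expansion

variable {ι 𝕜 : Type*} [NormedField 𝕜] {l : Filter ι} {x h k : ι → 𝕜} {p q : 𝕜⟦X⟧} {M N : ℕ}

/-- `h = p₀ + p₁ x + ⋯ + p_{N-1} x^{N-1} + O(x^N)` along `l`: the power series `p` is the
asymptotic expansion of `h` to order `N` in the scale `x`, which in applications tends to `0`. -/
def HasExpansion (l : Filter ι) (x h : ι → 𝕜) (p : 𝕜⟦X⟧) (N : ℕ) : Prop :=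
  (fun i => h i - (p.trunc N).eval (x i)) =O[l] fun i => x i ^ N

lemma eval_trunc_eq_sum (p : 𝕜⟦X⟧) (N : ℕ) (z : 𝕜) :
    (p.trunc N).eval z = ∑ n ∈ range N, PowerSeries.coeff n p * z ^ n :=
  PowerSeries.eval₂_trunc_eq_sum_range z (RingHom.id 𝕜) N p

lemma isBigO_eval_of_X_pow_dvd (hx : Tendsto x l (𝓝 0)) {P : 𝕜[X]} (hP : X ^ N ∣ P) :
    (fun i => P.eval (x i)) =O[l] fun i => x i ^ N := by
  obtain ⟨Q, rfl⟩ := hP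
  have hQ : (fun i => Q.eval (x i)) =O[l] fun _ => (1 : 𝕜) :=
    ((Q.continuous.tendsto 0).comp hx).isBigO_one 𝕜
  simpa [eval_mul] using (isBigO_refl (fun i => x i ^ N) l).mul hQ

lemma hasExpansion_eval (hx : Tendsto x l (𝓝 0)) (P : 𝕜[X]) (N : ℕ) :
    HasExpansion l x (fun i => P.eval (x i)) P N := by
  have hdvd : X ^ N ∣ P - PowerSeries.trunc N (P : 𝕜⟦X⟧) := by
    rw [X_pow_dvd_iff]
    intro d hd
    simp [PowerSeries.coeff_trunc, hd]
  simpa [HasExpansion] using isBigO_eval_of_X_pow_dvd hx hdvd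

namespace HasExpansion

lemma of_le (hx : Tendsto x l (𝓝 0)) (hMN : M ≤ N) (hh : HasExpansion l x h p N) :
    HasExpansion l x h p M := by
  have hpow : (fun i => x i ^ N) =O[l] fun i => x i ^ M := by
    simpa using isBigO_eval_of_X_pow_dvd hx (pow_dvd_pow (X : 𝕜[X]) hMN)
  have htrunc := hasExpansion_eval hx (p.trunc N) M
  rw [HasExpansion, PowerSeries.trunc_trunc_of_le p hMN] at htrunc
  exact ((hh.trans hpow).add htrunc).congr_left fun i => by ring

lemma isBigO_one (hx : Tendsto x l (𝓝 0)) (hh : HasExpansion l x h p N) :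
    h =O[l] fun _ => (1 : 𝕜) := by
  simpa [HasExpansion] using hh.of_le hx N.zero_le

lemma isBigO_self (hx : Tendsto x l (𝓝 0)) (hN : 1 ≤ N) (hp : PowerSeries.constantCoeff p = 0)
    (hh : HasExpansion l x h p N) : h =O[l] x := by
  simpa [HasExpansion, eval_trunc_eq_sum, hp] using hh.of_le hx hN

lemma sub (hh : HasExpansion l x h p N) (hk : HasExpansion l x k q N) :
    HasExpansion l x (fun i => h i - k i) (p - q) N :=
  (IsBigO.sub hh hk).congr_left fun i => by
    rw [map_sub, eval_sub]
    ring

lemma mul (hx : Tendsto x l (𝓝 0)) (hh : HasExpansion l x h p N) (hk : HasExpansion l x k q N) :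
    HasExpansion l x (fun i => h i * k i) (p * q) N := by
  have htrunc := hasExpansion_eval hx (p.trunc N * q.trunc N) N
  rw [HasExpansion, Polynomial.coe_mul, PowerSeries.trunc_trunc_mul_trunc] at htrunc
  have hleft : (fun i => (h i - (p.trunc N).eval (x i)) * k i) =O[l] fun i => x i ^ N := by
    simpa using IsBigO.mul hh (hk.isBigO_one hx)
  have hright : (fun i => (p.trunc N).eval (x i) * (k i - (q.trunc N).eval (x i)))
      =O[l] fun i => x i ^ N := by
    simpa using ((hasExpansion_eval hx (p.trunc N) N).isBigO_one hx).mul hk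
  exact ((hleft.add hright).add htrunc).congr_left fun i => by
    rw [eval_mul]
    ring

lemma pow_mul (hx : Tendsto x l (𝓝 0)) (hh : HasExpansion l x h p N)
    (hk : HasExpansion l x k q N) (j : ℕ) :
    HasExpansion l x (fun i => h i ^ j * k i) (p ^ j * q) N := by
  induction j with
  | zero => simpa using hk
  | succ j ih => simpa only [pow_succ', mul_assoc] using hh.mul hx ih

end HasExpansion

end Expansion

section Exponential

lemma isBigO_pow_exp_mul {c : ℝ} (hc : 0 < c) (n : ℕ) :
    (fun u : ℝ => u ^ n) =O[𝓟 (Set.Ici 0)] fun u => Real.exp (c * u) := by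
  refine isBigO_principal.2 ⟨n.factorial / c ^ n, fun u hu => ?_⟩
  have hu : 0 ≤ u := hu
  have hexp := Real.pow_div_factorial_le_exp (c * u) (by positivity) n
  rw [mul_pow, div_le_iff₀ (by positivity)] at hexp
  rw [Real.norm_of_nonneg (by positivity), Real.norm_of_nonneg (by positivity),
    div_mul_eq_mul_div, le_div_iff₀ (by positivity)]
  linarith

lemma isBigO_neg_pow_div_factorial_exp_mul {c : ℝ} (hc : 0 < c) (j : ℕ) :
    (fun u : ℝ => (-(u : ℂ)) ^ j / (j.factorial : ℂ))
      =O[𝓟 (Set.Ici 0)] fun u => Real.exp (c * u) := by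
  refine IsBigO.trans ?_ (isBigO_pow_exp_mul hc j)
  simpa only [div_eq_inv_mul] using (isBigO_of_le _ (by simp)).const_mul_left _

/-- The truncation to order `N` in `z` of the power series of `exp (-u φ(z)) ψ(z)`, where `φ` has
no constant term: then `φ ^ j` starts in degree `j`, so only the terms `j < N` of the exponential
series contribute. -/
noncomputable def expMulTrunc (φ ψ : ℂ⟦X⟧) (N : ℕ) (z u : ℂ) : ℂ :=
  ∑ j ∈ range N, (-u) ^ j / (j.factorial : ℂ) * ((φ ^ j * ψ).trunc N).eval z

variable {ι : Type*} {l : Filter ι} {x R H : ι → ℂ} {φ ψ : ℂ⟦X⟧} {N : ℕ} {c : ℝ}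

/-- Near the limit `‖R‖ ≤ c / 2`, so half of the exponential weight absorbs the remainder
`exp (u ‖R‖)` of the exponential series and the other half absorbs the power `u ^ N`. -/
lemma isBigO_exp_neg_mul_sub_sum (hx : Tendsto x l (𝓝 0)) (hR : R =O[l] x) (hc : 0 < c) (N : ℕ) :
    (fun i : ι × ℝ => Complex.exp (-(i.2 * R i.1)) -
      ∑ j ∈ range N, (-(i.2 * R i.1)) ^ j / (j.factorial : ℂ))
      =O[l ×ˢ 𝓟 (Set.Ici 0)] fun i => ‖x i.1‖ ^ N * Real.exp (c * i.2) := by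
  have hsmall : ∀ᶠ i in l ×ˢ 𝓟 (Set.Ici (0 : ℝ)), ‖R i.1‖ < c / 2 ∧ i.2 ∈ Set.Ici 0 :=
    (((hR.trans_tendsto hx).norm.eventually_lt_const (by simpa using half_pos hc)).prod_inl _).and
      (tendsto_snd (mem_principal_self _))
  have hremainder : (fun i : ι × ℝ => Complex.exp (-(i.2 * R i.1)) -
      ∑ j ∈ range N, (-(i.2 * R i.1)) ^ j / (j.factorial : ℂ))
      =O[l ×ˢ 𝓟 (Set.Ici 0)] fun i => ‖R i.1‖ ^ N * (i.2 ^ N * Real.exp (c / 2 * i.2)) := by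
    refine IsBigO.of_norm_eventuallyLE ?_
    filter_upwards [hsmall] with i ⟨hRi, hi⟩
    have hi : 0 ≤ i.2 := hi
    have hnorm : ‖-(i.2 * R i.1 : ℂ)‖ = i.2 * ‖R i.1‖ := by
      rw [norm_neg, norm_mul, Complex.norm_real, Real.norm_of_nonneg hi]
    calc _ ≤ (i.2 * ‖R i.1‖) ^ N * Real.exp (i.2 * ‖R i.1‖) :=
          hnorm ▸ Complex.norm_exp_sub_sum_le_norm_mul_exp _ N
      _ ≤ (i.2 * ‖R i.1‖) ^ N * Real.exp (i.2 * (c / 2)) := by gcongr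
      _ = ‖R i.1‖ ^ N * (i.2 ^ N * Real.exp (c / 2 * i.2)) := by ring_nf
  have hweight : (fun u : ℝ => u ^ N * Real.exp (c / 2 * u))
      =O[𝓟 (Set.Ici 0)] fun u => Real.exp (c * u) :=
    ((isBigO_pow_exp_mul (half_pos hc) N).mul (isBigO_refl _ _)).congr_right fun u => by
      rw [← Real.exp_add]
      ring_nf
  exact hremainder.trans (((hR.norm_norm.comp_fst _).pow N).mul (hweight.comp_snd _))

lemma isBigO_exp_neg_mul_mul_sub_expMulTrunc (hx : Tendsto x l (𝓝 0)) (hRx : R =O[l] x)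
    (hR : HasExpansion l x R φ N) (hH : HasExpansion l x H ψ N) (hc : 0 < c) :
    (fun i : ι × ℝ => Complex.exp (-(i.2 * R i.1)) * H i.1 - expMulTrunc φ ψ N (x i.1) i.2)
      =O[l ×ˢ 𝓟 (Set.Ici 0)] fun i => ‖x i.1‖ ^ N * Real.exp (c * i.2) := by
  have hexp : (fun i : ι × ℝ => (Complex.exp (-(i.2 * R i.1)) -
      ∑ j ∈ range N, (-(i.2 * R i.1)) ^ j / (j.factorial : ℂ)) * H i.1)
      =O[l ×ˢ 𝓟 (Set.Ici 0)] fun i => ‖x i.1‖ ^ N * Real.exp (c * i.2) := by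
    simpa using (isBigO_exp_neg_mul_sub_sum hx hRx hc N).mul
      ((hH.isBigO_one hx).norm_right.comp_fst _)
  have hterm (j : ℕ) : (fun i : ι × ℝ =>
      (R i.1 ^ j * H i.1 - ((φ ^ j * ψ).trunc N).eval (x i.1)) *
        ((-(i.2 : ℂ)) ^ j / (j.factorial : ℂ)))
      =O[l ×ˢ 𝓟 (Set.Ici 0)] fun i => ‖x i.1‖ ^ N * Real.exp (c * i.2) := by
    simpa using (IsBigO.norm_right (hR.pow_mul hx hH j)).comp_fst _ |>.mul
      ((isBigO_neg_pow_div_factorial_exp_mul hc j).comp_snd _)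
  refine (hexp.add (IsBigO.fun_sum fun j (_ : j ∈ range N) => hterm j)).congr_left fun i => ?_
  have hpow (j : ℕ) : (-(i.2 * R i.1)) ^ j / (j.factorial : ℂ) * H i.1 =
      R i.1 ^ j * H i.1 * ((-(i.2 : ℂ)) ^ j / (j.factorial : ℂ)) := by
    ring
  simp only [expMulTrunc, sub_mul, sum_sub_distrib, sum_mul, hpow, mul_comm (eval _ _)]
  ring

end Exponential

section Bell

/-- The power series `∑_{m ≥ 1} f m * x ^ m`, whose powers generate the Bell polynomials. -/
noncomputable def obellSeries (f : ℕ → ℂ) : ℂ⟦X⟧ :=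
  PowerSeries.mk fun m => if m = 0 then 0 else f m

lemma constantCoeff_obellSeries (f : ℕ → ℂ) : PowerSeries.constantCoeff (obellSeries f) = 0 := by
  simp [obellSeries, ← PowerSeries.coeff_zero_eq_constantCoeff_apply]

lemma obellSeries_eq_mk_sub_C (f : ℕ → ℂ) :
    obellSeries f = PowerSeries.mk f - PowerSeries.C (f 0) := by
  ext n
  rcases n with _ | n <;> simp [obellSeries]

lemma obell_eq_zero_of_lt (f : ℕ → ℂ) {k j : ℕ} (hkj : k < j) : obell f k j = 0 :=
  PowerSeries.X_pow_dvd_iff.1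
    (pow_dvd_pow_of_dvd (PowerSeries.X_dvd_iff.2 (constantCoeff_obellSeries f)) j) k hkj

lemma coeff_obellSeries_pow_mul_mk (f B : ℕ → ℂ) (j n : ℕ) :
    PowerSeries.coeff n (obellSeries f ^ j * PowerSeries.mk B) =
      ∑ k ∈ range (n + 1), obell f k j * B (n - k) := by
  simp only [PowerSeries.coeff_mul, PowerSeries.coeff_mk]
  exact Nat.sum_antidiagonal_eq_sum_range_succ (fun k i => obell f k j * B i) n

lemma sum_mul_coeff_obellSeries_pow_mul_mk (f B w : ℕ → ℂ) {n N : ℕ} (hn : n < N) :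
    ∑ j ∈ range N, w j * PowerSeries.coeff n (obellSeries f ^ j * PowerSeries.mk B) =
      ∑ k ∈ range (n + 1), B (n - k) * ∑ j ∈ range (k + 1), w j * obell f k j := by
  have hinner : ∀ k ∈ range (n + 1), ∑ j ∈ range (k + 1), w j * obell f k j =
      ∑ j ∈ range N, w j * obell f k j := fun k hk => by
    refine sum_subset (range_mono (by grind)) fun j _ hj => ?_
    rw [obell_eq_zero_of_lt f (by grind), mul_zero]
  rw [sum_congr rfl fun k hk => congrArg (B (n - k) * ·) (hinner k hk)]
  simp only [coeff_obellSeries_pow_mul_mk, mul_sum]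
  rw [sum_comm]
  exact sum_congr rfl fun k _ => sum_congr rfl fun j _ => by ring

end Bell

section GammaKernel

/-- The integrand `t ^ (s - 1) * exp (-r t ^ α)`; the substitution `y = t ^ α` turns it into the
integrand of `Γ(s / α)`. -/
noncomputable def gammaKernel (α : ℝ) (s : ℂ) (r t : ℝ) : ℂ :=
  (t : ℂ) ^ (s - 1) * Complex.exp (-(r * (t ^ α : ℝ)))

variable {α r : ℝ} {s : ℂ}

lemma norm_gammaKernel (α : ℝ) (s : ℂ) (r : ℝ) {t : ℝ} (ht : 0 < t) :
    ‖gammaKernel α s r t‖ = t ^ (s.re - 1) * Real.exp (-r * t ^ α) := by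
  rw [gammaKernel, norm_mul, Complex.norm_cpow_eq_rpow_re_of_pos ht, Complex.norm_exp]
  simp [← Complex.ofReal_mul]

lemma continuousOn_gammaKernel (hα : 0 ≤ α) (s : ℂ) (r : ℝ) :
    ContinuousOn (gammaKernel α s r) (Set.Ioi 0) := by
  have hcpow : ContinuousOn (fun t : ℝ => (t : ℂ) ^ (s - 1)) (Set.Ioi 0) := fun t ht =>
    (Complex.continuousAt_ofReal_cpow_const t _ (Or.inr (ne_of_gt ht))).continuousWithinAt
  have hrpow : Continuous fun t : ℝ => t ^ α := Real.continuous_rpow_const hα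
  exact hcpow.mul (Complex.continuous_exp.comp
    (continuous_const.mul (Complex.continuous_ofReal.comp hrpow)).neg).continuousOn

lemma integrableOn_gammaKernel (hα : 0 < α) (hs : 0 < s.re) (hr : 0 < r) :
    IntegrableOn (gammaKernel α s r) (Set.Ioi 0) := by
  have hmajorant : IntegrableOn (fun t : ℝ => t ^ (s.re - 1) * Real.exp (-r * t ^ α))
      (Set.Ioi 0) := integrableOn_rpow_mul_exp_neg_mul_rpow (by linarith) hα hr
  refine hmajorant.mono' ((continuousOn_gammaKernel hα.le s r).aestronglyMeasurable
    measurableSet_Ioi) ?_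
  filter_upwards [ae_restrict_mem measurableSet_Ioi] with t ht
  exact (norm_gammaKernel α s r ht).le

lemma rpow_smul_gammaKernel_one {t : ℝ} (ht : 0 < t) (hα : α ≠ 0) (s : ℂ) (r : ℝ) :
    (α * t ^ (α - 1)) • gammaKernel 1 (s / α) r (t ^ α) = α * gammaKernel α s r t := by
  have htC : (t : ℂ) ≠ 0 := mod_cast ht.ne'
  have hαC : (α : ℂ) ≠ 0 := mod_cast hα
  have hpow : (t : ℂ) ^ (s - 1) = (t ^ (α - 1) : ℝ) * ((t ^ α : ℝ) : ℂ) ^ (s / α - 1) := by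
    rw [← Complex.cpow_mul_ofReal_nonneg ht.le, Complex.ofReal_cpow ht.le (α - 1),
      ← Complex.cpow_add _ _ htC, Complex.ofReal_sub, Complex.ofReal_one, mul_sub,
      mul_div_cancel₀ s hαC]
    ring_nf
  rw [gammaKernel, gammaKernel, hpow, Complex.real_smul, Real.rpow_one]
  push_cast
  ring

lemma integral_gammaKernel (hα : 0 < α) (hs : 0 < s.re) (hr : 0 < r) :
    ∫ t in Set.Ioi 0, gammaKernel α s r t = Complex.Gamma (s / α) / α * (r : ℂ) ^ (-(s / α)) := by
  have hαC : (α : ℂ) ≠ 0 := mod_cast hα.ne'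
  have hre : 0 < (s / α).re := by
    rw [Complex.div_ofReal_re]
    positivity
  have hGamma : ∫ y in Set.Ioi 0, gammaKernel 1 (s / α) r y =
      (r : ℂ) ^ (-(s / α)) * Complex.Gamma (s / α) := by
    simp only [gammaKernel, Real.rpow_one]
    rw [Complex.integral_cpow_mul_exp_neg_mul_Ioi hre hr, one_div, Complex.cpow_neg,
      Complex.inv_cpow _ _ (by simp [Complex.arg_ofReal_of_nonneg hr.le, Real.pi_ne_zero.symm])]
  rw [← integral_comp_rpow_Ioi_of_pos hα, setIntegral_congr_fun measurableSet_Ioi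
    fun t ht => rpow_smul_gammaKernel_one ht hα.ne' s r, integral_const_mul] at hGamma
  rw [div_mul_eq_mul_div, eq_div_iff hαC, mul_comm _ (α : ℂ), hGamma, mul_comm]

lemma pow_mul_pow_mul_gammaKernel {t : ℝ} (ht : 0 < t) (α : ℝ) (s : ℂ) (r : ℝ) (n j : ℕ) :
    (t : ℂ) ^ n * ((t ^ α : ℝ) : ℂ) ^ j * gammaKernel α s r t =
      gammaKernel α (n + s + α * j) r t := by
  have htC : (t : ℂ) ≠ 0 := mod_cast ht.ne'
  rw [gammaKernel, gammaKernel, show (n : ℂ) + s + α * j - 1 = n + α * j + (s - 1) by ring,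
    Complex.cpow_add _ _ htC, Complex.cpow_add _ _ htC, Complex.cpow_natCast,
    Complex.cpow_mul_nat, Complex.ofReal_cpow ht.le]
  ring

end GammaKernel

section Model

/-- The model integrand: `exp (-l F(t)) G(t)` for `F(t) = t ^ α (a₀ + φ(t))` and
`G(t) = t ^ (β - 1) ψ(t)`, with the power series of `exp (-u φ) ψ` at `u = l t ^ α` truncated to
order `N`. -/
noncomputable def laplaceModel (φ ψ : ℂ⟦X⟧) (N : ℕ) (α : ℝ) (β : ℂ) (a₀ l t : ℝ) : ℂ :=
  expMulTrunc φ ψ N t (l * t ^ α : ℝ) * gammaKernel α β (a₀ * l) t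

variable {α : ℝ} {β : ℂ} {a₀ l : ℝ}

lemma laplaceModel_eq_sum (φ ψ : ℂ⟦X⟧) (N : ℕ) (α : ℝ) (β : ℂ) (a₀ l : ℝ) {t : ℝ} (ht : 0 < t) :
    laplaceModel φ ψ N α β a₀ l t = ∑ n ∈ range N, ∑ j ∈ range N,
      (-1) ^ j / (j.factorial : ℂ) * PowerSeries.coeff n (φ ^ j * ψ) *
        ((l : ℂ) ^ j * gammaKernel α (n + β + α * j) (a₀ * l) t) := by
  simp only [laplaceModel, expMulTrunc, eval_trunc_eq_sum, mul_sum, sum_mul,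
    ← pow_mul_pow_mul_gammaKernel ht]
  rw [sum_comm]
  refine sum_congr rfl fun n _ => sum_congr rfl fun j _ => ?_
  rw [Complex.ofReal_mul, neg_pow, mul_pow]
  ring

lemma natCast_add_add_mul_natCast_re_pos (hα : 0 ≤ α) (hβ : 0 < β.re) (n j : ℕ) :
    0 < ((n : ℂ) + β + α * j).re := by
  simp only [Complex.add_re, Complex.natCast_re, Complex.re_ofReal_mul]
  positivity

lemma integral_pow_mul_gammaKernel (hα : 0 < α) (hβ : 0 < β.re) (ha₀ : 0 < a₀) (hl : 0 < l)
    (n j : ℕ) :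
    ∫ t in Set.Ioi 0, (l : ℂ) ^ j * gammaKernel α (n + β + α * j) (a₀ * l) t =
      Complex.Gamma ((n + β) / α + j) / (a₀ : ℂ) ^ ((n + β) / α + j) / α *
        (l : ℂ) ^ (-((n + β) / α)) := by
  have hαC : (α : ℂ) ≠ 0 := mod_cast hα.ne'
  have hlC : (l : ℂ) ≠ 0 := mod_cast hl.ne'
  rw [integral_const_mul, integral_gammaKernel hα
      (natCast_add_add_mul_natCast_re_pos hα.le hβ n j) (by positivity),
    add_div _ _ (α : ℂ), mul_div_cancel_left₀ _ hαC, Complex.ofReal_mul,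
    Complex.mul_cpow_ofReal_nonneg ha₀.le hl.le, Complex.cpow_neg (a₀ : ℂ), neg_add,
    Complex.cpow_add _ _ hlC, Complex.cpow_neg (l : ℂ) j, Complex.cpow_natCast]
  field_simp

variable (φ ψ : ℂ⟦X⟧) (N : ℕ)

lemma integrableOn_laplaceModel (hα : 0 < α) (hβ : 0 < β.re) (ha₀ : 0 < a₀) (hl : 0 < l) :
    IntegrableOn (laplaceModel φ ψ N α β a₀ l) (Set.Ioi 0) := by
  refine IntegrableOn.congr_fun ?_ (fun t ht => (laplaceModel_eq_sum φ ψ N α β a₀ l ht).symm)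
    measurableSet_Ioi
  exact integrable_finsetSum _ fun n _ => integrable_finsetSum _ fun j _ =>
    ((integrableOn_gammaKernel hα (natCast_add_add_mul_natCast_re_pos hα.le hβ n j)
      (by positivity)).const_mul _).const_mul _

lemma integral_laplaceModel (hα : 0 < α) (hβ : 0 < β.re) (ha₀ : 0 < a₀) (hl : 0 < l) :
    ∫ t in Set.Ioi 0, laplaceModel φ ψ N α β a₀ l t =
      ∑ n ∈ range N, (∑ j ∈ range N, (-1) ^ j / (j.factorial : ℂ) *
        (Complex.Gamma ((n + β) / α + j) / (a₀ : ℂ) ^ ((n + β) / α + j)) *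
          PowerSeries.coeff n (φ ^ j * ψ)) / α * (l : ℂ) ^ (-((n + β) / α)) := by
  have hint (n j : ℕ) : IntegrableOn (fun t =>
      (-1) ^ j / (j.factorial : ℂ) * PowerSeries.coeff n (φ ^ j * ψ) *
        ((l : ℂ) ^ j * gammaKernel α (n + β + α * j) (a₀ * l) t)) (Set.Ioi 0) :=
    ((integrableOn_gammaKernel hα (natCast_add_add_mul_natCast_re_pos hα.le hβ n j)
      (by positivity)).const_mul _).const_mul _
  rw [setIntegral_congr_fun measurableSet_Ioi fun t ht => laplaceModel_eq_sum φ ψ N α β a₀ l ht,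
    integral_finsetSum _ fun n _ => integrable_finsetSum _ fun j _ => hint n j]
  refine sum_congr rfl fun n _ => ?_
  rw [integral_finsetSum _ fun j _ => hint n j, sum_div, sum_mul]
  refine sum_congr rfl fun j _ => ?_
  rw [integral_const_mul, integral_pow_mul_gammaKernel hα hβ ha₀ hl]
  ring

end Model

section Estimates

lemma eventually_Ioo_subset_of_mem_nhdsGT {X : Type*} [TopologicalSpace X] [LinearOrder X]
    [OrderTopology X] [NoMaxOrder X] {a : X} {s : Set X} (hs : s ∈ 𝓝[>] a) :
    ∀ᶠ b in 𝓝[>] a, Set.Ioo a b ⊆ s := by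
  obtain ⟨u, hu, hus⟩ := mem_nhdsGT_iff_exists_Ioo_subset.1 hs
  filter_upwards [Ioo_mem_nhdsGT hu] with b hb
  exact (Set.Ioo_subset_Ioo_right hb.2.le).trans hus

lemma eventually_isBigO_principal_Ioo_prod {X Y E E' : Type*} [TopologicalSpace X] [LinearOrder X]
    [OrderTopology X] [NoMaxOrder X] [Norm E] [Norm E'] {a : X} {s : Set Y} {f : X × Y → E}
    {g : X × Y → E'} (hfg : f =O[𝓝[>] a ×ˢ 𝓟 s] g) :
    ∀ᶠ b in 𝓝[>] a, f =O[𝓟 (Set.Ioo a b) ×ˢ 𝓟 s] g := by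
  obtain ⟨C, hC⟩ := hfg.bound
  filter_upwards [eventually_Ioo_subset_of_mem_nhdsGT
    (eventually_prod_principal_iff.1 hC)] with b hb
  rw [prod_principal_principal]
  exact isBigO_principal.2 ⟨C, fun p hp => hb hp.1 p.2 hp.2⟩

lemma isBigO_eval_trunc_principal_Ici (p : ℂ⟦X⟧) (N : ℕ) {δ : ℝ} (hδ : 0 < δ) :
    (fun t : ℝ => (p.trunc N).eval (t : ℂ)) =O[𝓟 (Set.Ici δ)] fun t => t ^ N := by
  have hone : (fun _ : ℝ => (1 : ℝ)) =O[𝓟 (Set.Ici δ)] fun t => t :=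
    isBigO_principal.2 ⟨δ⁻¹, fun t ht => by
      rw [norm_one, Real.norm_of_nonneg (hδ.le.trans ht), ← div_eq_inv_mul]
      exact (one_le_div hδ).2 ht⟩
  have hpow {n : ℕ} (hn : n ≤ N) : (fun t : ℝ => (t : ℂ) ^ n) =O[𝓟 (Set.Ici δ)] fun t => t ^ N := by
    have hreal := (isBigO_refl (fun t : ℝ => t ^ n) (𝓟 (Set.Ici δ))).mul (hone.pow (N - n))
    simp only [one_pow, mul_one, ← pow_add, Nat.add_sub_cancel' hn] at hreal
    exact (isBigO_of_le _ (by simp)).trans hreal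
  simp only [eval_trunc_eq_sum]
  exact IsBigO.fun_sum fun n hn => (hpow (mem_range.1 hn).le).const_mul_left _

lemma isBigO_expMulTrunc_principal_Ici (φ ψ : ℂ⟦X⟧) (N : ℕ) {δ c : ℝ} (hδ : 0 < δ) (hc : 0 < c) :
    (fun i : ℝ × ℝ => expMulTrunc φ ψ N i.1 i.2)
      =O[𝓟 (Set.Ici δ) ×ˢ 𝓟 (Set.Ici 0)] fun i => i.1 ^ N * Real.exp (c * i.2) := by
  refine IsBigO.fun_sum fun j _ => ?_
  exact ((isBigO_eval_trunc_principal_Ici _ N hδ).comp_fst _).mul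
    ((isBigO_neg_pow_div_factorial_exp_mul hc j).comp_snd _) |>.congr_left fun i => mul_comm _ _

variable {α : ℝ} {β : ℂ} {a₀ : ℝ}

lemma isBigO_integral_rpow_mul_exp_neg_mul_rpow {q r : ℝ} (hα : 0 < α) (hq : 0 < q) (hr : 0 < r) :
    (fun l : ℝ => ∫ t in Set.Ioi (0 : ℝ), t ^ (q - 1) * Real.exp (-(r * l) * t ^ α))
      =O[atTop] fun l => l ^ (-(q / α)) := by
  refine IsBigO.congr' (isBigO_const_mul_self (r ^ (-(q / α)) * (1 / α) * Real.Gamma (q / α)) _ _)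
    ?_ EventuallyEq.rfl
  filter_upwards [eventually_gt_atTop 0] with l hl
  rw [integral_rpow_mul_exp_neg_mul_rpow hα (by linarith) (by positivity), sub_add_cancel, neg_div,
    Real.mul_rpow hr.le hl.le]
  ring

lemma norm_mul_gammaKernel_le {t : ℝ} (ht : 0 < t) (α : ℝ) (β : ℂ) (a₀ : ℝ) {c l C : ℝ} {N : ℕ}
    {z : ℂ} (hz : ‖z‖ ≤ C * (t ^ N * Real.exp (c * (l * t ^ α)))) :
    ‖z * gammaKernel α β (a₀ * l) t‖ ≤
      C * (t ^ (N + β.re - 1) * Real.exp (-((a₀ - c) * l) * t ^ α)) := by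
  rw [norm_mul, norm_gammaKernel α β _ ht]
  calc _ ≤ C * (t ^ N * Real.exp (c * (l * t ^ α))) *
        (t ^ (β.re - 1) * Real.exp (-(a₀ * l) * t ^ α)) := by gcongr
    _ = C * (t ^ N * t ^ (β.re - 1) *
        (Real.exp (c * (l * t ^ α)) * Real.exp (-(a₀ * l) * t ^ α))) := by ring
    _ = _ := by
      rw [← Real.rpow_natCast t N, ← Real.rpow_add ht, ← Real.exp_add]
      ring_nf

lemma isBigO_setIntegral_mul_gammaKernel (hα : 0 < α) (hβ : 0 < β.re) {c : ℝ} (hc : c < a₀) {N : ℕ}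
    {V : Set ℝ} (hV : MeasurableSet V) (hV0 : V ⊆ Set.Ioi 0) {E : ℝ × ℝ → ℂ}
    (hE : E =O[𝓟 V ×ˢ 𝓟 (Set.Ici 0)] fun i => i.1 ^ N * Real.exp (c * i.2)) :
    (fun l : ℝ => ∫ t in V, E (t, l * t ^ α) * gammaKernel α β (a₀ * l) t)
      =O[atTop] fun l => l ^ (-((N + β.re) / α)) := by
  rw [prod_principal_principal] at hE
  obtain ⟨C, hC0, hC⟩ := hE.exists_nonneg
  rw [isBigOWith_principal] at hC
  set q : ℝ := N + β.re
  have hq0 : 0 < q := by positivity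
  let w (l t : ℝ) : ℝ := t ^ (q - 1) * Real.exp (-((a₀ - c) * l) * t ^ α)
  have hpoint {l t : ℝ} (hl : 0 < l) (ht : t ∈ V) :
      ‖E (t, l * t ^ α) * gammaKernel α β (a₀ * l) t‖ ≤ C * w l t := by
    have ht0 : 0 < t := hV0 ht
    refine norm_mul_gammaKernel_le ht0 α β a₀ ((hC (t, l * t ^ α) ⟨ht, ?_⟩).trans_eq ?_)
    · exact Set.mem_Ici.2 (by positivity)
    · rw [Real.norm_of_nonneg (by positivity)]
  refine IsBigO.trans (IsBigO.of_bound C ?_)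
    (isBigO_integral_rpow_mul_exp_neg_mul_rpow hα hq0 (sub_pos.2 hc))
  filter_upwards [eventually_gt_atTop 0] with l hl
  have hwint : IntegrableOn (w l) (Set.Ioi 0) :=
    integrableOn_rpow_mul_exp_neg_mul_rpow (by linarith) hα (mul_pos (sub_pos.2 hc) hl)
  have hw0 : ∀ᵐ t ∂volume.restrict (Set.Ioi 0), 0 ≤ w l t := by
    filter_upwards [ae_restrict_mem measurableSet_Ioi] with t (ht : 0 < t)
    positivity
  calc _ ≤ ∫ t in V, C * w l t :=
        norm_integral_le_of_norm_le ((hwint.mono_set hV0).const_mul C)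
          ((ae_restrict_mem hV).mono fun t ht => hpoint hl ht)
    _ = C * ∫ t in V, w l t := integral_const_mul _ _
    _ ≤ C * ‖∫ t in Set.Ioi 0, w l t‖ := by
      gcongr
      exact (setIntegral_mono_set hwint hw0 hV0.eventuallyLE).trans (Real.le_norm_self _)

lemma isBigO_integral_exp_neg_mul {X : Type*} [MeasurableSpace X] {μ : Measure X} {F : X → ℝ}
    {G : X → ℂ} {m Λ : ℝ} (hF : ∀ᵐ x ∂μ, m ≤ F x)
    (hint : Integrable (fun x => (Real.exp (-Λ * F x) : ℂ) * G x) μ) :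
    (fun l : ℝ => ∫ x, (Real.exp (-l * F x) : ℂ) * G x ∂μ)
      =O[atTop] fun l => Real.exp (-m * l) := by
  refine IsBigO.of_bound (Real.exp (m * Λ) * ∫ x, ‖(Real.exp (-Λ * F x) : ℂ) * G x‖ ∂μ) ?_
  filter_upwards [eventually_ge_atTop Λ] with l hl
  calc _ ≤ ∫ x, Real.exp (-m * (l - Λ)) * ‖(Real.exp (-Λ * F x) : ℂ) * G x‖ ∂μ := by
        refine norm_integral_le_of_norm_le (hint.norm.const_mul _) ?_
        filter_upwards [hF] with x hx
        rw [norm_mul, norm_mul, Complex.norm_of_nonneg (Real.exp_pos _).le,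
          Complex.norm_of_nonneg (Real.exp_pos _).le, ← mul_assoc, ← Real.exp_add]
        gcongr
        nlinarith
    _ = _ := by
      rw [integral_const_mul, Real.norm_of_nonneg (Real.exp_pos _).le,
        show -m * (l - Λ) = m * Λ + -m * l by ring, Real.exp_add]
      ring

end Estimates

section LaplaceMethodAtZero

variable {α a₀ : ℝ} {β : ℂ} {F : ℝ → ℝ} {G : ℝ → ℂ} {φ ψ : ℂ⟦X⟧} {N : ℕ} {T : Set ℝ}

lemma tendsto_ofReal_nhdsGT_zero : Tendsto (fun t : ℝ => (t : ℂ)) (𝓝[>] 0) (𝓝 0) :=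
  (Complex.continuous_ofReal.tendsto' 0 0 Complex.ofReal_zero).mono_left nhdsWithin_le_nhds

lemma hasExpansion_div_cpow {h : ℝ → ℂ} {p : ℕ → ℂ} {γ : ℂ}
    (hh : (fun t : ℝ => h t - ∑ k ∈ range N, p k * (t : ℂ) ^ ((k : ℂ) + γ))
      =O[𝓝[>] 0] fun t : ℝ => t ^ ((N : ℝ) + γ.re)) :
    HasExpansion (𝓝[>] 0) (fun t : ℝ => (t : ℂ)) (fun t => h t / (t : ℂ) ^ γ)
      (PowerSeries.mk p) N := by
  refine (hh.mul (isBigO_refl (fun t : ℝ => ((t : ℂ) ^ γ)⁻¹) _).norm_right).congr' ?_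
    EventuallyEq.rfl |>.trans (IsBigO.of_bound' ?_)
  · filter_upwards [self_mem_nhdsWithin] with t ht
    have htC : (t : ℂ) ≠ 0 := mod_cast (Set.mem_Ioi.1 ht).ne'
    have hγ : (t : ℂ) ^ γ ≠ 0 := by simp [Complex.cpow_eq_zero_iff, htC]
    simp only [eval_trunc_eq_sum, PowerSeries.coeff_mk, Complex.cpow_add _ _ htC,
      Complex.cpow_natCast, ← mul_assoc, ← sum_mul, sub_mul, mul_inv_cancel_right₀ hγ,
      div_eq_mul_inv]
  · filter_upwards [self_mem_nhdsWithin] with t (ht : 0 < t)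
    rw [norm_inv, Complex.norm_cpow_eq_rpow_re_of_pos ht, Real.rpow_add ht, Real.rpow_natCast,
      mul_inv_cancel_right₀ (by positivity), norm_pow, norm_pow, Complex.norm_real]

lemma exp_neg_mul_mul_eq_mul_gammaKernel {t : ℝ} (ht : 0 < t) (α a₀ : ℝ) (β : ℂ) (l y : ℝ)
    (z : ℂ) :
    (Real.exp (-l * y) : ℂ) * z =
      Complex.exp (-((l * t ^ α : ℝ) * (y / (t : ℂ) ^ (α : ℂ) - a₀))) * (z / (t : ℂ) ^ (β - 1)) *
        gammaKernel α β (a₀ * l) t := by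
  have htC : (t : ℂ) ≠ 0 := mod_cast ht.ne'
  have hα : (t : ℂ) ^ (α : ℂ) ≠ 0 := by simp [Complex.cpow_eq_zero_iff, htC]
  have hβ : (t : ℂ) ^ (β - 1) ≠ 0 := by simp [Complex.cpow_eq_zero_iff, htC]
  have hexp : Complex.exp (-l * y) =
      Complex.exp (-(l * (t : ℂ) ^ (α : ℂ) * (y / (t : ℂ) ^ (α : ℂ) - a₀))) *
        Complex.exp (-(a₀ * l * (t : ℂ) ^ (α : ℂ))) := by
    rw [← Complex.exp_add]
    congr 1
    field_simp
    ring
  rw [gammaKernel]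
  push_cast [Complex.ofReal_cpow ht.le]
  rw [hexp]
  field_simp

lemma eventually_isBigO_setIntegral_Ioo_sub_laplaceModel (hα : 0 < α) (hβ : 0 < β.re)
    (ha₀ : 0 < a₀)
    (hRx : (fun t : ℝ => (F t : ℂ) / (t : ℂ) ^ (α : ℂ) - a₀) =O[𝓝[>] 0] fun t : ℝ => (t : ℂ))
    (hR : HasExpansion (𝓝[>] 0) (fun t : ℝ => (t : ℂ))
      (fun t => (F t : ℂ) / (t : ℂ) ^ (α : ℂ) - a₀) φ N)
    (hH : HasExpansion (𝓝[>] 0) (fun t : ℝ => (t : ℂ)) (fun t => G t / (t : ℂ) ^ (β - 1)) ψ N) :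
    ∀ᶠ δ in 𝓝[>] 0, (fun l : ℝ => ∫ t in Set.Ioo 0 δ,
        ((Real.exp (-l * F t) : ℂ) * G t - laplaceModel φ ψ N α β a₀ l t))
      =O[atTop] fun l => l ^ (-((N + β.re) / α)) := by
  have hnear := (isBigO_exp_neg_mul_mul_sub_expMulTrunc tendsto_ofReal_nhdsGT_zero hRx hR hH
    (half_pos ha₀)).trans
    (isBigO_of_le (g := fun i : ℝ × ℝ => i.1 ^ N * Real.exp (a₀ / 2 * i.2)) _ (by simp))
  filter_upwards [eventually_isBigO_principal_Ioo_prod hnear] with δ hδ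
  refine (isBigO_setIntegral_mul_gammaKernel hα hβ (half_lt_self ha₀) measurableSet_Ioo
    Set.Ioo_subset_Ioi_self hδ).congr_left fun l => ?_
  refine setIntegral_congr_fun measurableSet_Ioo fun t ht => ?_
  simp only [laplaceModel, sub_mul, exp_neg_mul_mul_eq_mul_gammaKernel ht.1 α a₀ β l (F t) (G t)]

lemma isBigO_setIntegral_Ici_laplaceModel (φ ψ : ℂ⟦X⟧) (N : ℕ) (hα : 0 < α) (hβ : 0 < β.re)
    (ha₀ : 0 < a₀) {δ : ℝ} (hδ : 0 < δ) :
    (fun l : ℝ => ∫ t in Set.Ici δ, laplaceModel φ ψ N α β a₀ l t)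
      =O[atTop] fun l => l ^ (-((N + β.re) / α)) :=
  isBigO_setIntegral_mul_gammaKernel hα hβ (half_lt_self ha₀) measurableSet_Ici
    (Set.Ici_subset_Ioi.2 hδ) (isBigO_expMulTrunc_principal_Ici φ ψ N hδ (half_pos ha₀))

lemma isBigO_setIntegral_diff_Ioo (hT : MeasurableSet T) (hT0 : T ⊆ Set.Ioi 0)
    (hinf : ∀ δ > 0, ∃ m > 0, ∀ t ∈ T, δ ≤ t → m ≤ F t)
    (hint : ∃ Λ : ℝ, IntegrableOn (fun t => (Real.exp (-Λ * F t) : ℂ) * G t) T) {δ : ℝ}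
    (hδ : 0 < δ) (s : ℝ) :
    (fun l : ℝ => ∫ t in T \ Set.Ioo 0 δ, (Real.exp (-l * F t) : ℂ) * G t)
      =O[atTop] fun l => l ^ s := by
  obtain ⟨m, hm, hmF⟩ := hinf δ hδ
  obtain ⟨Λ, hΛ⟩ := hint
  refine (isBigO_integral_exp_neg_mul ?_ (hΛ.mono_set Set.sdiff_subset)).trans
    (isLittleO_exp_neg_mul_rpow_atTop hm s).isBigO
  filter_upwards [ae_restrict_mem (hT.diff measurableSet_Ioo)] with t ht
  exact hmF t ht.1 (not_lt.1 fun h => ht.2 ⟨hT0 ht.1, h⟩)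

lemma isBigO_setIntegral_sub_integral_laplaceModel (hα : 0 < α) (hβ : 0 < β.re) (ha₀ : 0 < a₀)
    (hT : MeasurableSet T) (hT0 : T ⊆ Set.Ioi 0) (hTnhds : T ∈ 𝓝[>] 0)
    (hinf : ∀ δ > 0, ∃ m > 0, ∀ t ∈ T, δ ≤ t → m ≤ F t)
    (hRx : (fun t : ℝ => (F t : ℂ) / (t : ℂ) ^ (α : ℂ) - a₀) =O[𝓝[>] 0] fun t : ℝ => (t : ℂ))
    (hR : HasExpansion (𝓝[>] 0) (fun t : ℝ => (t : ℂ))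
      (fun t => (F t : ℂ) / (t : ℂ) ^ (α : ℂ) - a₀) φ N)
    (hH : HasExpansion (𝓝[>] 0) (fun t : ℝ => (t : ℂ)) (fun t => G t / (t : ℂ) ^ (β - 1)) ψ N)
    (hint : ∀ᶠ l : ℝ in atTop, IntegrableOn (fun t => (Real.exp (-l * F t) : ℂ) * G t) T) :
    (fun l : ℝ => (∫ t in T, (Real.exp (-l * F t) : ℂ) * G t) -
        ∫ t in Set.Ioi 0, laplaceModel φ ψ N α β a₀ l t)
      =O[atTop] fun l => l ^ (-((N + β.re) / α)) := by
  obtain ⟨δ, hnear, hδT, hδ⟩ :=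
    ((eventually_isBigO_setIntegral_Ioo_sub_laplaceModel hα hβ ha₀ hRx hR hH).and
      ((eventually_Ioo_subset_of_mem_nhdsGT hTnhds).and self_mem_nhdsWithin)).exists
  have htail := isBigO_setIntegral_diff_Ioo hT hT0 hinf hint.exists hδ (-((N + β.re) / α))
  have hfar := isBigO_setIntegral_Ici_laplaceModel φ ψ N hα hβ ha₀ hδ
  refine ((hnear.add htail).sub hfar).congr' ?_ EventuallyEq.rfl
  filter_upwards [hint, eventually_gt_atTop 0] with l hl hl0
  have hmodel := integrableOn_laplaceModel φ ψ N hα hβ ha₀ hl0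
  rw [integral_sub (hl.mono_set hδT) (hmodel.mono_set Set.Ioo_subset_Ioi_self),
    setIntegral_sdiff measurableSet_Ioo hl hδT, ← Set.Ioo_union_Ici_eq_Ioi hδ,
    setIntegral_union (by simp [Set.disjoint_left]) measurableSet_Ici
      (hmodel.mono_set Set.Ioo_subset_Ioi_self) (hmodel.mono_set (Set.Ici_subset_Ioi.2 hδ))]
  ring

end LaplaceMethodAtZero

section LaplaceCoeff

variable {α : ℝ} {β : ℂ} {A : ℕ → ℝ} {B : ℕ → ℂ} {l : ℝ}

/-- Wojdylo's coefficient `cₙ` of the expansion, for `f(x) - f(a) = ∑ Aₖ (x - a) ^ (k + α)` and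
`g(x) = ∑ Bₖ (x - a) ^ (k + β - 1)`. -/
noncomputable def laplaceCoeff (α : ℝ) (β : ℂ) (A : ℕ → ℝ) (B : ℕ → ℂ) (n : ℕ) : ℂ :=
  1 / (α * Complex.Gamma ((n + β) / α)) * ∑ k ∈ range (n + 1), B (n - k) *
    ∑ j ∈ range (k + 1), (-1) ^ j / ((A 0 : ℂ) ^ ((n + β) / α + j) * (j.factorial : ℂ)) *
      Complex.Gamma ((n + β) / α + j) * obell (fun m => (A m : ℂ)) k j

lemma Gamma_mul_laplaceCoeff (hα : 0 < α) (hβ : 0 < β.re) (A : ℕ → ℝ) (B : ℕ → ℂ) (n : ℕ) :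
    Complex.Gamma ((n + β) / α) * laplaceCoeff α β A B n =
      (∑ k ∈ range (n + 1), B (n - k) * ∑ j ∈ range (k + 1),
        (-1) ^ j / (j.factorial : ℂ) *
          (Complex.Gamma ((n + β) / α + j) / (A 0 : ℂ) ^ ((n + β) / α + j)) *
            obell (fun m => (A m : ℂ)) k j) / α := by
  have hΓ : Complex.Gamma ((n + β) / α) ≠ 0 := by
    refine Complex.Gamma_ne_zero_of_re_pos ?_
    rw [Complex.div_ofReal_re, Complex.add_re, Complex.natCast_re]
    positivity
  have hterm (k j : ℕ) : (-1) ^ j / ((A 0 : ℂ) ^ ((n + β) / α + j) * (j.factorial : ℂ)) *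
      Complex.Gamma ((n + β) / α + j) * obell (fun m => (A m : ℂ)) k j =
      (-1) ^ j / (j.factorial : ℂ) *
        (Complex.Gamma ((n + β) / α + j) / (A 0 : ℂ) ^ ((n + β) / α + j)) *
          obell (fun m => (A m : ℂ)) k j := by
    ring
  simp only [laplaceCoeff, hterm]
  rw [← mul_assoc, one_div, mul_inv_rev, mul_inv_cancel_left₀ hΓ, inv_mul_eq_div]

lemma integral_laplaceModel_obellSeries (hα : 0 < α) (hβ : 0 < β.re) (hA : 0 < A 0) (hl : 0 < l)
    (N : ℕ) :
    ∫ t in Set.Ioi 0, laplaceModel (obellSeries fun m => (A m : ℂ)) (PowerSeries.mk B) N α β (A 0)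
        l t =
      ∑ n ∈ range N, Complex.Gamma ((n + β) / α) * laplaceCoeff α β A B n *
        (l : ℂ) ^ (-((n + β) / α)) := by
  rw [integral_laplaceModel _ _ N hα hβ hA hl]
  refine sum_congr rfl fun n hn => ?_
  rw [Gamma_mul_laplaceCoeff hα hβ,
    sum_mul_coeff_obellSeries_pow_mul_mk _ B _ (mem_range.1 hn)]

end LaplaceCoeff

section LaplaceMethod

variable {a α : ℝ} {β : ℂ} {f : ℝ → ℝ} {g : ℝ → ℂ} {A : ℕ → ℝ} {B : ℕ → ℂ} {S : Set ℝ} {N : ℕ}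

lemma tendsto_add_right_nhdsGT_zero (a : ℝ) : Tendsto (fun t => t + a) (𝓝[>] 0) (𝓝[>] a) := by
  refine tendsto_nhdsWithin_of_tendsto_nhds_of_eventually_within _ ?_ ?_
  · exact ((continuous_add_const a).tendsto' 0 a (zero_add a)).mono_left nhdsWithin_le_nhds
  · filter_upwards [self_mem_nhdsWithin] with t ht
    simpa using ht

lemma exp_neg_mul_mul_eq_exp_mul_exp_sub (l x y : ℝ) (z : ℂ) :
    (Real.exp (-l * x) : ℂ) * z = Real.exp (-l * y) * ((Real.exp (-l * (x - y)) : ℂ) * z) := by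
  rw [← mul_assoc, ← Complex.ofReal_mul, ← Real.exp_add]
  ring_nf

lemma setIntegral_exp_neg_mul_comp_add_right (f : ℝ → ℝ) (g : ℝ → ℂ) (S : Set ℝ) (a y l : ℝ) :
    ∫ x in S, (Real.exp (-l * f x) : ℂ) * g x =
      Real.exp (-l * y) *
        ∫ t in (· + a) ⁻¹' S, (Real.exp (-l * (f (t + a) - y)) : ℂ) * g (t + a) := by
  rw [← (measurePreserving_add_right volume a).setIntegral_preimage_emb
    (measurableEmbedding_addRight a), ← integral_const_mul]
  simp only [← exp_neg_mul_mul_eq_exp_mul_exp_sub]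

lemma integrableOn_exp_neg_mul_comp_add_right {l : ℝ}
    (hint : IntegrableOn (fun x => (Real.exp (-l * f x) : ℂ) * g x) S) (a y : ℝ) :
    IntegrableOn (fun t => (Real.exp (-l * (f (t + a) - y)) : ℂ) * g (t + a)) ((· + a) ⁻¹' S) := by
  rw [IntegrableOn, ← integrable_const_mul_iff (c := (Real.exp (-l * y) : ℂ)) (by simp)]
  simp only [← exp_neg_mul_mul_eq_exp_mul_exp_sub]
  exact ((measurePreserving_add_right volume a).integrableOn_comp_preimage
    (measurableEmbedding_addRight a)).2 hint

lemma hasExpansion_comp_add_right_div_cpow_sub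
    (hf : (fun x => f x - f a - ∑ k ∈ range N, A k * (x - a) ^ ((k : ℝ) + α))
      =O[𝓝[>] a] fun x => (x - a) ^ ((N : ℝ) + α)) :
    HasExpansion (𝓝[>] 0) (fun t : ℝ => (t : ℂ))
      (fun t => ((f (t + a) - f a : ℝ) : ℂ) / (t : ℂ) ^ (α : ℂ) - A 0)
      (obellSeries fun k => (A k : ℂ)) N := by
  have hquot : HasExpansion (𝓝[>] 0) (fun t : ℝ => (t : ℂ))
      (fun t => ((f (t + a) - f a : ℝ) : ℂ) / (t : ℂ) ^ (α : ℂ))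
      (PowerSeries.mk fun k => (A k : ℂ)) N := by
    refine hasExpansion_div_cpow ?_
    have hshift := Complex.isBigO_ofReal_left.2
      (hf.comp_tendsto (tendsto_add_right_nhdsGT_zero a))
    refine hshift.congr' ?_ (.of_eq (by ext; simp))
    filter_upwards [self_mem_nhdsWithin] with t (ht : 0 < t)
    simp [Complex.ofReal_cpow ht.le]
  rw [obellSeries_eq_mk_sub_C]
  simpa using hquot.sub (hasExpansion_eval tendsto_ofReal_nhdsGT_zero (Polynomial.C (A 0 : ℂ)) N)

lemma hasExpansion_comp_add_right_div_cpow
    (hg : (fun x : ℝ => g x - ∑ k ∈ range N, B k * ((x : ℂ) - a) ^ ((k : ℂ) + β - 1))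
      =O[𝓝[>] a] fun x => (x - a) ^ ((N : ℝ) + β.re - 1)) :
    HasExpansion (𝓝[>] 0) (fun t : ℝ => (t : ℂ)) (fun t => g (t + a) / (t : ℂ) ^ (β - 1))
      (PowerSeries.mk B) N := by
  refine hasExpansion_div_cpow ?_
  refine (hg.comp_tendsto (tendsto_add_right_nhdsGT_zero a)).congr (fun t => ?_) fun t => ?_ <;>
    simp [add_sub_assoc]

theorem laplace_method_general (hα : 0 < α) (hβ : 0 < β.re) (hA : 0 < A 0) (hS : MeasurableSet S)
    (hSa : S ⊆ Set.Ioi a) (hSnhds : S ∈ 𝓝[>] a)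
    (hinf : ∀ δ > 0, ∃ m > 0, ∀ x ∈ S, a + δ ≤ x → m ≤ f x - f a)
    (hf : (fun x => f x - f a - ∑ k ∈ range (N + 1), A k * (x - a) ^ ((k : ℝ) + α))
      =O[𝓝[>] a] fun x => (x - a) ^ (((N + 1 : ℕ) : ℝ) + α))
    (hg : (fun x : ℝ => g x - ∑ k ∈ range N, B k * ((x : ℂ) - a) ^ ((k : ℂ) + β - 1))
      =O[𝓝[>] a] fun x => (x - a) ^ ((N : ℝ) + β.re - 1))
    (hint : ∀ᶠ l : ℝ in atTop, IntegrableOn (fun x => (Real.exp (-l * f x) : ℂ) * g x) S) :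
    (fun l : ℝ => (∫ x in S, (Real.exp (-l * f x) : ℂ) * g x) -
        (Real.exp (-l * f a) : ℂ) * ∑ n ∈ range N, Complex.Gamma ((n + β) / α) *
          laplaceCoeff α β A B n * (l : ℂ) ^ (-((n + β) / α)))
      =O[atTop] fun l => Real.exp (-l * f a) * l ^ (-((N + β.re) / α)) := by
  have hR := hasExpansion_comp_add_right_div_cpow_sub hf
  have hzero := isBigO_setIntegral_sub_integral_laplaceModel (T := (· + a) ⁻¹' S)
    (F := fun t => f (t + a) - f a) (G := fun t => g (t + a)) hα hβ hA
    (hS.preimage (measurable_add_const a))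
    (fun t ht => by simpa using hSa ht) (tendsto_add_right_nhdsGT_zero a hSnhds)
    (fun δ hδ => (hinf δ hδ).imp fun m hm =>
      ⟨hm.1, fun t ht hδt => hm.2 (t + a) ht (by linarith)⟩)
    (hR.isBigO_self tendsto_ofReal_nhdsGT_zero (Nat.le_add_left 1 N) (constantCoeff_obellSeries _))
    (hR.of_le tendsto_ofReal_nhdsGT_zero N.le_succ) (hasExpansion_comp_add_right_div_cpow hg)
    (hint.mono fun l hl => integrableOn_exp_neg_mul_comp_add_right hl a (f a))
  have hexp : (fun l : ℝ => (Real.exp (-l * f a) : ℂ)) =O[atTop] fun l => Real.exp (-l * f a) :=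
    Complex.isBigO_ofReal_left.2 (isBigO_refl _ _)
  refine (hexp.mul hzero).congr' ?_ EventuallyEq.rfl
  filter_upwards [eventually_gt_atTop 0] with l hl
  rw [setIntegral_exp_neg_mul_comp_add_right f g S a (f a), integral_laplaceModel_obellSeries hα hβ
    hA hl, mul_sub]

lemma measurableSet_Ioo_coe_ereal (a : ℝ) (b : EReal) :
    MeasurableSet {x : ℝ | a < x ∧ (x : EReal) < b} :=
  measurableSet_Ioi.inter (measurableSet_Iio.preimage measurable_coe_real_ereal)

lemma Ioo_coe_ereal_mem_nhdsGT {b : EReal} (hab : (a : EReal) < b) :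
    {x : ℝ | a < x ∧ (x : EReal) < b} ∈ 𝓝[>] a :=
  inter_mem self_mem_nhdsWithin (mem_nhdsWithin_of_mem_nhds
    ((isOpen_Iio.preimage continuous_coe_real_ereal).mem_nhds hab))

end LaplaceMethod

/-- **Laplace's method (Erdélyi's theorem, with Wojdylo's explicit coefficients).**
Let `-∞ < a < b ≤ +∞`, `α > 0`, `Re β > 0`, and suppose that on `S = (a, b)`:
(i) `f(x) > f(a)` and `f - f(a)` is bounded below by a positive constant on every
`[a + δ, b)`; (ii) `f` is differentiable with `f'`, `g` continuous near `a⁺`;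
(iii) `f - f(a)`, `f'` and `g` admit the asymptotic expansions
`∑ aₖ (x-a)^{k+α}`, `∑ aₖ(k+α)(x-a)^{k+α-1}`, `∑ bₖ (x-a)^{k+β-1}` as `x → a⁺`;
(iv) `∫_a^b e^{-λ f(x)} g(x) dx` converges absolutely for all large `λ`.
Then for every `N`, as `λ → +∞`,
`∫_a^b e^{-λ f} g = e^{-λ f(a)} (∑_{n<N} Γ((n+β)/α) cₙ λ^{-(n+β)/α} + O(λ^{-(N+Re β)/α}))`,
where `cₙ = (1/(α Γ((n+β)/α))) ∑_{k=0}^n b_{n-k} ∑_{j=0}^k ((-1)^j/(a₀^{(n+β)/α+j} j!))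
Γ((n+β)/α+j) B_{k,j}(a₁,…,a_{k-j+1})`. -/
theorem laplace_method
    (a : ℝ) (b : EReal) (hab : (a : EReal) < b)
    (α : ℝ) (hα : 0 < α) (β : ℂ) (hβ : 0 < β.re)
    (f : ℝ → ℝ) (g : ℝ → ℂ) (A : ℕ → ℝ) (B : ℕ → ℂ)
    (hA0 : 0 < A 0) (hB0 : B 0 ≠ 0)
    (S : Set ℝ) (hS : S = {x : ℝ | a < x ∧ (x : EReal) < b})
    -- (i)
    (hmin : ∀ x ∈ S, f a < f x)
    (hinf : ∀ δ : ℝ, 0 < δ → ∃ m : ℝ, 0 < m ∧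
      ∀ x : ℝ, a + δ ≤ x → (x : EReal) < b → m ≤ f x - f a)
    -- (ii)
    (hreg : ∃ ε : ℝ, 0 < ε ∧ (∀ x ∈ Set.Ioo a (a + ε), DifferentiableAt ℝ f x) ∧
      ContinuousOn (deriv f) (Set.Ioo a (a + ε)) ∧ ContinuousOn g (Set.Ioo a (a + ε)))
    -- (iii)
    (hf : ∀ N : ℕ,
      (fun x : ℝ => f x - f a - ∑ k ∈ Finset.range N, A k * (x - a) ^ ((k : ℝ) + α))
        =O[𝓝[>] a] fun x : ℝ => (x - a) ^ ((N : ℝ) + α))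
    (hf' : ∀ N : ℕ,
      (fun x : ℝ =>
          deriv f x - ∑ k ∈ Finset.range N, A k * ((k : ℝ) + α) * (x - a) ^ ((k : ℝ) + α - 1))
        =O[𝓝[>] a] fun x : ℝ => (x - a) ^ ((N : ℝ) + α - 1))
    (hg : ∀ N : ℕ,
      (fun x : ℝ =>
          g x - ∑ k ∈ Finset.range N, B k * ((x : ℂ) - (a : ℂ)) ^ ((k : ℂ) + β - 1))
        =O[𝓝[>] a] fun x : ℝ => (x - a) ^ ((N : ℝ) + β.re - 1))
    -- (iv)
    (hint : ∃ Λ : ℝ, ∀ l : ℝ, Λ ≤ l →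
      IntegrableOn (fun x : ℝ => (Real.exp (-l * f x) : ℂ) * g x) S)
    -- the coefficients
    (c : ℕ → ℂ)
    (hc : ∀ n : ℕ, c n =
      (1 / ((α : ℂ) * Complex.Gamma (((n : ℂ) + β) / (α : ℂ)))) *
        ∑ k ∈ Finset.range (n + 1), B (n - k) *
          ∑ j ∈ Finset.range (k + 1),
            ((-1 : ℂ) ^ j /
                (((A 0 : ℂ) ^ ((((n : ℂ) + β) / (α : ℂ)) + (j : ℂ))) * (Nat.factorial j : ℂ))) *
              Complex.Gamma ((((n : ℂ) + β) / (α : ℂ)) + (j : ℂ)) *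
              obell (fun m => (A m : ℂ)) k j) :
    ∀ N : ℕ,
      (fun l : ℝ =>
          (∫ x in S, (Real.exp (-l * f x) : ℂ) * g x) -
            (Real.exp (-l * f a) : ℂ) *
              ∑ n ∈ Finset.range N,
                Complex.Gamma (((n : ℂ) + β) / (α : ℂ)) * c n *
                  (l : ℂ) ^ (-(((n : ℂ) + β) / (α : ℂ))))
        =O[atTop] fun l : ℝ =>
          Real.exp (-l * f a) * l ^ (-(((N : ℝ) + β.re) / α)) := by
  intro N
  subst hS
  obtain rfl : c = laplaceCoeff α β A B := funext hc
  exact laplace_method_general hα hβ hA0 (measurableSet_Ioo_coe_ereal a b) (fun x hx => hx.1)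
    (Ioo_coe_ereal_mem_nhdsGT hab)
    (fun δ hδ => (hinf δ hδ).imp fun m hm => ⟨hm.1, fun x hx hδx => hm.2 x hδx hx.2⟩)
    (hf (N + 1)) (hg N) (eventually_atTop.2 hint)
end

section
/- Let φ : ℂ → ℂ be analytic at 0 with φ(0) = 1 and Taylor expansion φ(x) = 1 + Σ_{m≥1} f_m x^m, and let ρ ∈ ℂ. Then the function ψ(x) = exp(ρ · Log φ(x)) (principal branch of the logarithm, defined on a neighborhood of 0 on which φ takes values near 1) is analytic at 0, and for every n ≥ 0 its n-th Taylor coefficient at 0 satisfies ψ^{(n)}(0)/n! = A_{ρ,n}(f₁,…,f_n). -/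
/-!
Near a point, `g ∘ f` is the degree-`n` Taylor polynomial of `g` evaluated at `f` plus a multiple
of `(f - f x) ^ (n + 1)`, which does not contribute to the `n`-th Taylor coefficient. Hence the
Taylor series of a composition is the formal composition of the Taylor series. For `g w = w ^ ρ`
at `1` the outer series is the binomial series, and expanding its composition with `∑ f m * X ^ m`
in powers of the latter gives the potential polynomials.
-/

open Finset

/-- Generalized binomial coefficient `C(ρ, k) = ρ(ρ-1)⋯(ρ-k+1)/k!`. -/
noncomputable def gbinom (ρ : ℂ) (k : ℕ) : ℂ :=
  (∏ i ∈ Finset.range k, (ρ - i)) / (Nat.factorial k : ℂ)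

/-- Ordinary potential polynomials `A_{ρ,n}(f₁,…,f_n) = ∑_{k=0}^n C(ρ,k) B_{n,k}`. -/
noncomputable def opot (ρ : ℂ) (f : ℕ → ℂ) (n : ℕ) : ℂ :=
  ∑ k ∈ Finset.range (n + 1), gbinom ρ k * obell f n k

open Filter Topology
open scoped ContDiff

section PowerSeries

open PowerSeries

lemma coeff_mul_pow_eq_zero_of_lt {S : Type*} [CommSemiring S] {b : S⟦X⟧}
    (hb : constantCoeff b = 0) (c : S⟦X⟧) {n k : ℕ} (hnk : n < k) : coeff n (c * b ^ k) = 0 :=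
  X_pow_dvd_iff.1 ((pow_dvd_pow_of_dvd (X_dvd_iff.2 hb) k).mul_left c) n hnk

lemma coeff_subst_eq_sum_range {R S : Type*} [CommRing R] [CommRing S] [Algebra R S] {b : S⟦X⟧}
    (hb : constantCoeff b = 0) (a : R⟦X⟧) (n : ℕ) :
    coeff n (a.subst b) = ∑ k ∈ range (n + 1), coeff k a • coeff n (b ^ k) := by
  rw [coeff_subst' (.of_constantCoeff_zero' hb)]
  refine finsum_eq_sum_of_support_subset _ fun k hk => ?_
  by_contra hkn
  have hnk : n < k := by simpa using hkn
  have hzero : coeff n (b ^ k) = 0 := by simpa using coeff_mul_pow_eq_zero_of_lt hb 1 hnk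
  exact hk (by simp only [hzero, smul_zero])

end PowerSeries

section TaylorSeries

open PowerSeries

variable {𝕜 : Type*} [NontriviallyNormedField 𝕜] {f g : 𝕜 → 𝕜} {x : 𝕜}

/-- The Taylor series of `f` at `x`, as a formal power series in the displacement from `x`; it turns
operations on functions into operations on power series. Built from `iteratedDeriv`, it carries
junk values where `f` is not smooth at `x`, and divides by zero in positive characteristic. -/
noncomputable def taylorSeries (f : 𝕜 → 𝕜) (x : 𝕜) : 𝕜⟦X⟧ :=
  .mk fun n => iteratedDeriv n f x / (n.factorial : 𝕜)

lemma coeff_taylorSeries (f : 𝕜 → 𝕜) (x : 𝕜) (n : ℕ) :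
    coeff n (taylorSeries f x) = iteratedDeriv n f x / (n.factorial : 𝕜) :=
  coeff_mk _ _

lemma constantCoeff_taylorSeries (f : 𝕜 → 𝕜) (x : 𝕜) :
    constantCoeff (taylorSeries f x) = f x := by
  rw [← coeff_zero_eq_constantCoeff_apply, coeff_taylorSeries]
  simp

lemma taylorSeries_congr (h : f =ᶠ[𝓝 x] g) : taylorSeries f x = taylorSeries g x := by
  ext n
  rw [coeff_taylorSeries, coeff_taylorSeries, h.iteratedDeriv_eq n]

lemma taylorSeries_comp_const_add (f : 𝕜 → 𝕜) (s x : 𝕜) :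
    taylorSeries (fun z => f (s + z)) x = taylorSeries f (s + x) := by
  ext n
  rw [coeff_taylorSeries, coeff_taylorSeries, iteratedDeriv_comp_const_add]

lemma taylorSeries_const (c x : 𝕜) : taylorSeries (fun _ => c) x = C c := by
  ext n
  rw [coeff_taylorSeries, iteratedDeriv_const, coeff_C]
  split_ifs with hn <;> simp [hn]

lemma taylorSeries_const_mul (c : 𝕜) (f : 𝕜 → 𝕜) (x : 𝕜) :
    taylorSeries (fun z => c * f z) x = C c * taylorSeries f x := by
  ext n
  rw [coeff_C_mul, coeff_taylorSeries, coeff_taylorSeries, iteratedDeriv_const_mul_field,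
    mul_div_assoc]

lemma taylorSeries_add (hf : ContDiffAt 𝕜 ∞ f x) (hg : ContDiffAt 𝕜 ∞ g x) :
    taylorSeries (fun z => f z + g z) x = taylorSeries f x + taylorSeries g x := by
  ext n
  rw [map_add, coeff_taylorSeries, coeff_taylorSeries, coeff_taylorSeries,
    iteratedDeriv_fun_add (contDiffAt_infty.1 hf n) (contDiffAt_infty.1 hg n), add_div]

lemma taylorSeries_sub_const (hf : ContDiffAt 𝕜 ∞ f x) (c : 𝕜) :
    taylorSeries (fun z => f z - c) x = taylorSeries f x - C c := by
  simp only [sub_eq_add_neg, taylorSeries_add hf contDiffAt_const, taylorSeries_const, map_neg]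

lemma taylorSeries_sum {ι : Type*} {s : Finset ι} {F : ι → 𝕜 → 𝕜}
    (hF : ∀ i ∈ s, ContDiffAt 𝕜 ∞ (F i) x) :
    taylorSeries (fun z => ∑ i ∈ s, F i z) x = ∑ i ∈ s, taylorSeries (F i) x := by
  ext n
  simp only [coeff_taylorSeries, map_sum, sum_div,
    iteratedDeriv_fun_sum fun i hi => contDiffAt_infty.1 (hF i hi) n]

variable [CharZero 𝕜]

lemma taylorSeries_mul (hf : ContDiffAt 𝕜 ∞ f x) (hg : ContDiffAt 𝕜 ∞ g x) :
    taylorSeries (fun z => f z * g z) x = taylorSeries f x * taylorSeries g x := by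
  ext n
  simp only [coeff_taylorSeries, coeff_mul, Nat.sum_antidiagonal_eq_sum_range_succ_mk, sum_div,
    iteratedDeriv_fun_mul (contDiffAt_infty.1 hf n) (contDiffAt_infty.1 hg n)]
  refine sum_congr rfl fun i hi => ?_
  rw [Nat.cast_choose _ (mem_range_succ_iff.1 hi)]
  field_simp [Nat.factorial_ne_zero]

lemma taylorSeries_pow (hf : ContDiffAt 𝕜 ∞ f x) (k : ℕ) :
    taylorSeries (fun z => f z ^ k) x = taylorSeries f x ^ k := by
  induction k with
  | zero => simpa using taylorSeries_const 1 x
  | succ k ih => simp only [pow_succ, taylorSeries_mul (hf.pow k) hf, ih]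

variable [CompleteSpace 𝕜]

lemma taylorSeries_eq_mk_coeff {p : FormalMultilinearSeries 𝕜 𝕜 𝕜}
    (h : HasFPowerSeriesAt f p x) : taylorSeries f x = .mk p.coeff := by
  ext n
  rw [h.eq_formalMultilinearSeries h.analyticAt.hasFPowerSeriesAt, coeff_taylorSeries, coeff_mk,
    FormalMultilinearSeries.coeff_ofScalars]

lemma exists_eq_sum_taylorSeries_add_mul_pow (hf : AnalyticAt 𝕜 f x) (n : ℕ) :
    ∃ r : 𝕜 → 𝕜, AnalyticAt 𝕜 r x ∧ ∀ z,
      f z = ∑ k ∈ range n, coeff k (taylorSeries f x) * (z - x) ^ k + r z * (z - x) ^ n := by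
  have hshift : AnalyticAt 𝕜 (fun w => f (x + w)) 0 :=
    AnalyticAt.fun_comp (by simpa using hf) (by fun_prop)
  obtain ⟨r, hr, heq⟩ := hshift.exists_eq_sum_add_pow_mul n
  refine ⟨fun z => r (z - x), .fun_comp (by simpa using hr) (by fun_prop), fun z => ?_⟩
  have hz := heq (z - x)
  simp only [iteratedDeriv_comp_const_add, add_sub_cancel, add_zero, smul_eq_mul] at hz
  rw [hz, mul_comm (r _)]
  congr 1
  refine sum_congr rfl fun k _ => ?_
  rw [coeff_taylorSeries, div_mul_comm, div_mul_eq_mul_div]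

theorem taylorSeries_comp (hg : AnalyticAt 𝕜 g (f x)) (hf : AnalyticAt 𝕜 f x) :
    taylorSeries (fun z => g (f z)) x =
      (taylorSeries g (f x)).subst (taylorSeries f x - C (f x)) := by
  set a := taylorSeries g (f x)
  set b := taylorSeries f x - C (f x)
  have hb : constantCoeff b = 0 := by simp [b, constantCoeff_taylorSeries]
  have hsmooth : ContDiffAt 𝕜 ∞ f x := hf.contDiffAt
  have hsub : ContDiffAt 𝕜 ∞ (fun z => f z - f x) x := hsmooth.sub contDiffAt_const
  have hpow (k : ℕ) : taylorSeries (fun z => (f z - f x) ^ k) x = b ^ k := by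
    rw [taylorSeries_pow hsub, taylorSeries_sub_const hsmooth]
  ext n
  obtain ⟨r, hr, heq⟩ := exists_eq_sum_taylorSeries_add_mul_pow hg (n + 1)
  have hrf : ContDiffAt 𝕜 ∞ (fun z => r (f z)) x := (hr.fun_comp hf).contDiffAt
  have hterm (k : ℕ) : ContDiffAt 𝕜 ∞ (fun z => coeff k a * (f z - f x) ^ k) x :=
    contDiffAt_const.mul (hsub.pow k)
  have hexpand : taylorSeries (fun z => g (f z)) x =
      ∑ k ∈ range (n + 1), C (coeff k a) * b ^ k +
        taylorSeries (fun z => r (f z)) x * b ^ (n + 1) := by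
    simp only [heq]
    rw [taylorSeries_add (.sum fun k _ => hterm k) (hrf.mul (hsub.pow _)),
      taylorSeries_sum fun k _ => hterm k, taylorSeries_mul hrf (hsub.pow _)]
    simp only [taylorSeries_const_mul, hpow]
  rw [hexpand, map_add, coeff_mul_pow_eq_zero_of_lt hb _ n.lt_succ_self, add_zero,
    coeff_subst_eq_sum_range hb, map_sum]
  simp only [coeff_C_mul, smul_eq_mul]

end TaylorSeries

lemma taylorSeries_cpow_one (ρ : ℂ) :
    taylorSeries (fun z => z ^ ρ) 1 = PowerSeries.binomialSeries ℂ ρ := by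
  have hshift := taylorSeries_comp_const_add (fun z : ℂ => z ^ ρ) 1 0
  rw [add_zero] at hshift
  rw [← hshift, taylorSeries_eq_mk_coeff Complex.one_add_cpow_hasFPowerSeriesAt_zero]
  ext n
  simp [binomialSeries, PowerSeries.binomialSeries_coeff]

lemma ring_choose_eq_prod_range_div_factorial {K : Type*} [Field K] [CharZero K] (a : K) (k : ℕ) :
    Ring.choose a k = (∏ i ∈ range k, (a - i)) / (k.factorial : K) := by
  rw [Ring.choose_eq_smul, ← Polynomial.aeval_eq_smeval, Polynomial.aeval_def,
    Polynomial.eval₂_eq_eval_map, descPochhammer_map, descPochhammer_eval_eq_prod_range,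
    smul_eq_mul, inv_mul_eq_div]

lemma coeff_subst_binomialSeries_eq_opot (ρ : ℂ) (f : ℕ → ℂ) (n : ℕ) :
    PowerSeries.coeff n ((PowerSeries.binomialSeries ℂ ρ).subst
      (PowerSeries.mk fun m => if m = 0 then 0 else f m)) = opot ρ f n := by
  rw [coeff_subst_eq_sum_range (by simp [← PowerSeries.coeff_zero_eq_constantCoeff_apply])]
  simp only [PowerSeries.binomialSeries_coeff, smul_eq_mul, mul_one,
    ring_choose_eq_prod_range_div_factorial, opot, gbinom, obell]

/-- If `φ` is analytic at `0` with `φ(0) = 1` and Taylor coefficients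
`f_m = φ^{(m)}(0)/m!` for `m ≥ 1`, then `ψ(x) = exp(ρ · Log φ(x))` (principal logarithm)
is analytic at `0` and its `n`-th Taylor coefficient at `0` is the ordinary potential
polynomial `A_{ρ,n}(f₁,…,f_n)`. -/
theorem taylor_coeff_cpow_eq_opot (φ : ℂ → ℂ) (f : ℕ → ℂ) (ρ : ℂ)
    (hφ : AnalyticAt ℂ φ 0) (hφ0 : φ 0 = 1)
    (hf : ∀ m : ℕ, 1 ≤ m → f m = iteratedDeriv m φ 0 / (Nat.factorial m : ℂ)) :
    AnalyticAt ℂ (fun x => Complex.exp (ρ * Complex.log (φ x))) 0 ∧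
      ∀ n : ℕ,
        iteratedDeriv n (fun x => Complex.exp (ρ * Complex.log (φ x))) 0 /
            (Nat.factorial n : ℂ) = opot ρ f n := by
  have hcpow : (fun x => Complex.exp (ρ * Complex.log (φ x))) =ᶠ[𝓝 0] fun x => φ x ^ ρ := by
    filter_upwards [hφ.continuousAt.eventually_ne (by simp [hφ0] : φ 0 ≠ 0)] with x hx
    rw [Complex.cpow_def_of_ne_zero hx, mul_comm]
  have hpow : AnalyticAt ℂ (fun z => z ^ ρ) (φ 0) :=
    analyticAt_id.cpow analyticAt_const (by simp [hφ0])
  have hinner : taylorSeries φ 0 - PowerSeries.C (φ 0) =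
      PowerSeries.mk fun m => if m = 0 then 0 else f m := by
    ext m
    rcases m.eq_zero_or_pos with rfl | hm
    · simp [constantCoeff_taylorSeries]
    · simp [coeff_taylorSeries, PowerSeries.coeff_C, hm.ne', hf m hm]
  refine ⟨(hpow.fun_comp hφ).congr hcpow.symm, fun n => ?_⟩
  rw [← coeff_taylorSeries, taylorSeries_congr hcpow, taylorSeries_comp hpow hφ, hinner, hφ0,
    taylorSeries_cpow_one, coeff_subst_binomialSeries_eq_opot]
end

section
/- For all integers k ≥ 0 and n ≥ 0, the coefficient of x^n in the formal power series F^k (the k-th power of F) equals 2^k Σ_{j=0}^k (−1)^{n+k+j} C(k,j) · j! · s(n+k+j, j)/(n+k+j)!. -/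
open Finset

/-- The unsigned Stirling numbers of the first kind: `s(0,0) = 1`, `s(n,j) = 0` for
`j > n` or (`n ≥ 1` and `j = 0`), and `s(n+1,j) = s(n,j-1) + n·s(n,j)`. -/
def stirling1 : ℕ → ℕ → ℕ
  | 0, 0 => 1
  | 0, _ + 1 => 0
  | _ + 1, 0 => 0
  | n + 1, j + 1 => stirling1 n j + n * stirling1 n (j + 1)

/-- The formal power series `F(x) = 2(x - log(1+x))/x² = ∑_{m≥0} 2(-1)^m x^m/(m+2)`. -/
noncomputable def F : PowerSeries ℝ :=
  PowerSeries.mk fun m => 2 * (-1 : ℝ) ^ m / ((m : ℝ) + 2)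

/-!
Since `x² F(x) = 2(x - log(1+x))`, the coefficient of `x^n` in `F^k` is `2^k` times the coefficient
of `x^(n+2k)` in `(x - log(1+x))^k`, and the binomial theorem reduces it to coefficients of powers
of `log(1+x)`. From `(1+x) d/dx log(1+x)^(j+1) = (j+1) log(1+x)^j`, the numbers
`(-1)^(m+j) m!/j! [x^m] log(1+x)^j` satisfy the recurrence of the Stirling numbers of the first
kind.
-/

open PowerSeries

theorem stirling1_eq_stirlingFirst : ∀ n j : ℕ, stirling1 n j = Nat.stirlingFirst n j
  | 0, 0 => rfl
  | 0, _ + 1 => rfl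
  | _ + 1, 0 => rfl
  | n + 1, j + 1 => by
    rw [stirling1, Nat.stirlingFirst_succ_succ, stirling1_eq_stirlingFirst n j,
      stirling1_eq_stirlingFirst n (j + 1), add_comm]

theorem coeff_add_add_X_pow {R : Type*} [Semiring R] (f : R⟦X⟧) (n k : ℕ) :
    coeff (n + k) ((f + X) ^ k) = ∑ j ∈ range (k + 1), k.choose j * coeff (n + j) (f ^ j) := by
  rw [(commute_X f).add_pow, map_sum]
  refine sum_congr rfl fun j hj => ?_
  have hjk : n + k = n + j + (k - j) := by grind
  rw [← Nat.cast_comm, ← nsmul_eq_mul, map_nsmul, hjk, coeff_mul_X_pow, nsmul_eq_mul]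

theorem coeff_neg_pow {R : Type*} [Ring R] (f : R⟦X⟧) (m j : ℕ) :
    coeff m ((-f) ^ j) = (-1) ^ j * coeff m (f ^ j) := by
  rw [neg_pow, ← map_one C, ← map_neg, ← map_pow, coeff_C_mul]

theorem coeff_one_add_X_mul_derivative {R : Type*} [CommSemiring R] (f : R⟦X⟧) (m : ℕ) :
    coeff m ((1 + X) * d⁄dX R f) = (m + 1) * coeff (m + 1) f + m * coeff m f := by
  rw [add_mul, one_mul, map_add, coeff_derivative, mul_comm]
  cases m with
  | zero => simp
  | succ m => rw [coeff_succ_X_mul, coeff_derivative, Nat.cast_succ, mul_comm (coeff (m + 1) f)]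

section LogPowers

theorem one_add_X_mul_derivative_log (A : Type*) [CommRing A] [Algebra ℚ A] :
    (1 + X) * d⁄dX A (log A) = 1 := by
  ext m
  rw [deriv_log, add_mul, one_mul, map_add]
  cases m with
  | zero => simp
  | succ m => simp [coeff_succ_X_mul, coeff_one, pow_succ]

variable {A : Type*} [CommRing A] [Algebra ℚ A]

theorem one_add_X_mul_derivative_log_pow_succ (j : ℕ) :
    (1 + X) * d⁄dX A (log A ^ (j + 1)) = (j + 1) • log A ^ j := by
  rw [derivative_pow, Nat.add_sub_cancel, nsmul_eq_mul]
  linear_combination ((j + 1 : ℕ) : A⟦X⟧) * log A ^ j * one_add_X_mul_derivative_log A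

theorem coeff_succ_log_pow_succ (m j : ℕ) :
    (m + 1) * coeff (m + 1) (log A ^ (j + 1)) =
      (j + 1) * coeff m (log A ^ j) - m * coeff m (log A ^ (j + 1)) := by
  have h := congrArg (coeff m) (one_add_X_mul_derivative_log_pow_succ (A := A) j)
  rw [coeff_one_add_X_mul_derivative, map_nsmul, nsmul_eq_mul, Nat.cast_succ] at h
  exact eq_sub_of_add_eq h

theorem factorial_mul_coeff_log_pow (m j : ℕ) :
    m.factorial * coeff m (log A ^ j) =
      (-1) ^ (m + j) * j.factorial * Nat.stirlingFirst m j := by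
  induction m generalizing j with
  | zero => cases j <;> simp
  | succ m ih =>
    cases j with
    | zero => simp [coeff_one]
    | succ j =>
      rw [Nat.stirlingFirst_succ_succ, Nat.factorial_succ]
      have ihj_succ := ih (j + 1)
      rw [Nat.factorial_succ] at ihj_succ ⊢
      push_cast at ihj_succ ⊢
      linear_combination (m.factorial : A) * coeff_succ_log_pow_succ (A := A) m j +
        (j + 1) * ih j - m * ihj_succ

theorem coeff_log_pow {K : Type*} [Field K] [Algebra ℚ K] (m j : ℕ) :
    coeff m (log K ^ j) =
      (-1) ^ (m + j) * j.factorial * Nat.stirlingFirst m j / m.factorial := by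
  have : CharZero K := algebraRat.charZero K
  rw [← factorial_mul_coeff_log_pow, mul_div_cancel_left₀ _ (mod_cast m.factorial_ne_zero)]

end LogPowers

theorem X_sq_mul_F : X ^ 2 * F = C 2 * (-log ℝ + X) := by
  ext m
  rw [coeff_C_mul]
  match m with
  | 0 | 1 => simp [coeff_X_pow_mul']
  | m + 2 =>
    have hF : coeff m F = 2 * (-1) ^ m / (m + 2) := coeff_mk _ _
    have hlog : coeff (m + 2) (log ℝ) = -((-1) ^ m / (m + 2)) := by simp [pow_succ, neg_div]
    have hX : coeff (m + 2) (X : ℝ⟦X⟧) = 0 := by simp [coeff_X]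
    rw [coeff_X_pow_mul, map_add, map_neg, hF, hlog, hX, neg_neg, add_zero, mul_div_assoc]

theorem coeff_F_pow_eq_coeff_neg_log_add_X_pow (k n : ℕ) :
    coeff n (F ^ k) = 2 ^ k * coeff (n + k + k) ((-log ℝ + X) ^ k) := by
  rw [← coeff_C_mul, map_pow C, ← mul_pow, ← X_sq_mul_F, mul_pow, ← pow_mul, add_assoc, ← two_mul,
    coeff_X_pow_mul]

/-- The coefficient of `x^n` in `F^k` equals
`2^k ∑_{j=0}^k (-1)^{n+k+j} C(k,j) j! s(n+k+j,j)/(n+k+j)!`. -/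
theorem coeff_F_pow (k n : ℕ) :
    PowerSeries.coeff n (F ^ k) =
      2 ^ k * ∑ j ∈ Finset.range (k + 1),
        (-1 : ℝ) ^ (n + k + j) * (Nat.choose k j : ℝ) * (Nat.factorial j : ℝ) *
          (stirling1 (n + k + j) j : ℝ) / (Nat.factorial (n + k + j) : ℝ) := by
  rw [coeff_F_pow_eq_coeff_neg_log_add_X_pow, coeff_add_add_X_pow]
  congr 1
  refine sum_congr rfl fun j _ => ?_
  have hsign : (-1 : ℝ) ^ j * (-1) ^ (n + k + j + j) = (-1) ^ (n + k + j) := by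
    rw [pow_add _ _ j, mul_left_comm, ← mul_pow, neg_one_mul, neg_neg, one_pow, mul_one]
  rw [coeff_neg_pow, coeff_log_pow, stirling1_eq_stirlingFirst, ← hsign]
  ring
end

section
/- For every real λ > 0: Γ(λ) / (λ^λ e^{−λ}) = ∫_0^{+∞} e^{−λ(x − log(1+x))} dx + ∫_0^1 e^{−λ(−x − log(1−x))} dx, where both integrals are finite. -/
/-!
Euler's integral for `Γ(l + 1)`, rescaled by `l`, gives
`Γ(l) / (l ^ l * exp (-l)) = ∫ t in (0, ∞), exp (-l * φ t)` with the phase `φ t = t - 1 - log t`.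
The phase is minimal at `t = 1`; cutting the half-line there and substituting `t = 1 + x` on the
right and `t = 1 - x` on the left gives the two integrals.
-/

open MeasureTheory Real

section Substitution

variable {E : Type*} [NormedAddCommGroup E] {f : ℝ → E} {a c : ℝ}

theorem integrableOn_Ioi_comp_add_left_iff :
    IntegrableOn (fun x => f (c + x)) (Set.Ioi a) ↔ IntegrableOn f (Set.Ioi (c + a)) := by
  simpa [Function.comp_def] using
    (measurePreserving_add_left volume c).integrableOn_comp_preimage
      (measurableEmbedding_addLeft c) (f := f) (s := Set.Ioi (c + a))

theorem integrableOn_Ioo_comp_sub_left_iff {b : ℝ} :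
    IntegrableOn (fun x => f (c - x)) (Set.Ioo a b) ↔
      IntegrableOn f (Set.Ioo (c - b) (c - a)) := by
  simpa [Function.comp_def] using
    (Measure.measurePreserving_sub_left volume c).integrableOn_comp_preimage
      (MeasurableEquiv.subLeft c).measurableEmbedding (f := f) (s := Set.Ioo (c - b) (c - a))

variable [NormedSpace ℝ E]

theorem integral_Ioi_comp_add_left (f : ℝ → E) (a c : ℝ) :
    ∫ x in Set.Ioi a, f (c + x) = ∫ x in Set.Ioi (c + a), f x := by
  simpa using (measurePreserving_add_left volume c).setIntegral_preimage_emb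
    (measurableEmbedding_addLeft c) f (Set.Ioi (c + a))

theorem integral_Ioo_comp_sub_left (f : ℝ → E) (a b c : ℝ) :
    ∫ x in Set.Ioo a b, f (c - x) = ∫ x in Set.Ioo (c - b) (c - a), f x := by
  simpa using (Measure.measurePreserving_sub_left volume c).setIntegral_preimage_emb
    (MeasurableEquiv.subLeft c).measurableEmbedding f (Set.Ioo (c - b) (c - a))

theorem integral_Ioi_eq_integral_Ioi_comp_add_integral_Ioo_comp_sub (hac : a ≤ c)
    (hf : IntegrableOn f (Set.Ioi a)) :
    ∫ x in Set.Ioi a, f x =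
      (∫ x in Set.Ioi 0, f (c + x)) + ∫ x in Set.Ioo 0 (c - a), f (c - x) := by
  have hf_right : IntegrableOn f (Set.Ioi c) := hf.mono_set (Set.Ioi_subset_Ioi hac)
  rw [integral_Ioi_comp_add_left, integral_Ioo_comp_sub_left, add_zero, sub_zero, sub_sub_cancel,
    ← integral_Ioc_eq_integral_Ioo, ← intervalIntegral.integral_of_le hac, add_comm,
    intervalIntegral.integral_interval_add_Ioi hf hf_right]

end Substitution

section Gamma

variable {l : ℝ}

theorem exp_neg_mul_sub_one_sub_log (l : ℝ) {t : ℝ} (ht : 0 < t) :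
    exp (-l * (t - 1 - log t)) = exp l * (t ^ l * exp (-(l * t))) := by
  rw [rpow_def_of_pos ht, ← exp_add, ← exp_add]
  ring_nf

theorem integrableOn_exp_neg_mul_sub_one_sub_log (hl : 0 < l) :
    IntegrableOn (fun t => exp (-l * (t - 1 - log t))) (Set.Ioi 0) := by
  have h_rpow : IntegrableOn (fun t : ℝ => t ^ l * exp (-(l * t))) (Set.Ioi 0) := by
    simpa using integrableOn_rpow_mul_exp_neg_mul_rpow (by linarith : -1 < l) one_pos hl
  exact IntegrableOn.congr_fun (h_rpow.const_mul (exp l))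
    (fun t ht => (exp_neg_mul_sub_one_sub_log l ht).symm) measurableSet_Ioi

theorem integral_rpow_mul_exp_neg_mul_self_Ioi (hl : 0 < l) :
    ∫ t in Set.Ioi (0 : ℝ), t ^ l * exp (-(l * t)) = Gamma l / l ^ l := by
  calc
    ∫ t in Set.Ioi (0 : ℝ), t ^ l * exp (-(l * t)) = (1 / l) ^ (l + 1) * Gamma (l + 1) := by
      simpa using integral_rpow_mul_exp_neg_mul_Ioi (add_pos hl one_pos) hl
    _ = Gamma l / l ^ l := by
      rw [Gamma_add_one hl.ne', one_div, inv_rpow hl.le, rpow_add_one hl.ne']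
      field_simp

theorem integral_exp_neg_mul_sub_one_sub_log (hl : 0 < l) :
    ∫ t in Set.Ioi 0, exp (-l * (t - 1 - log t)) = Gamma l / (l ^ l * exp (-l)) := by
  rw [setIntegral_congr_fun measurableSet_Ioi fun t ht => exp_neg_mul_sub_one_sub_log l ht,
    integral_const_mul, integral_rpow_mul_exp_neg_mul_self_Ioi hl, exp_neg]
  field_simp

end Gamma

/-- For every `λ > 0`, `Γ(λ)/(λ^λ e^{-λ})` splits as the sum of the two Laplace-type
integrals `∫_0^∞ e^{-λ(x - log(1+x))} dx` and `∫_0^1 e^{-λ(-x - log(1-x))} dx`,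
both of which are finite. -/
theorem gamma_eq_sum_laplace_integrals (l : ℝ) (hl : 0 < l) :
    IntegrableOn (fun x : ℝ => Real.exp (-l * (x - Real.log (1 + x)))) (Set.Ioi 0) ∧
    IntegrableOn (fun x : ℝ => Real.exp (-l * (-x - Real.log (1 - x)))) (Set.Ioo 0 1) ∧
    Real.Gamma l / (l ^ l * Real.exp (-l)) =
      (∫ x in Set.Ioi (0 : ℝ), Real.exp (-l * (x - Real.log (1 + x)))) +
        ∫ x in Set.Ioo (0 : ℝ) 1, Real.exp (-l * (-x - Real.log (1 - x))) := by
  let f : ℝ → ℝ := fun t => exp (-l * (t - 1 - log t))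
  have hf : IntegrableOn f (Set.Ioi 0) := integrableOn_exp_neg_mul_sub_one_sub_log hl
  have hf_right (x : ℝ) : f (1 + x) = exp (-l * (x - log (1 + x))) := by
    simp only [f, add_sub_cancel_left]
  have hf_left (x : ℝ) : f (1 - x) = exp (-l * (-x - log (1 - x))) := by
    simp only [f, sub_sub_cancel_left]
  simp only [← hf_right, ← hf_left]
  refine ⟨integrableOn_Ioi_comp_add_left_iff.2 (hf.mono_set ?_),
    integrableOn_Ioo_comp_sub_left_iff.2 (hf.mono_set ?_), ?_⟩
  · exact Set.Ioi_subset_Ioi (by norm_num)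
  · simpa using Set.Ioo_subset_Ioi_self
  · rw [← integral_exp_neg_mul_sub_one_sub_log hl,
      integral_Ioi_eq_integral_Ioi_comp_add_integral_Ioo_comp_sub zero_le_one hf, sub_zero]
end
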